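/- For every natural number n, the product {n+1}_{s,t}·{n}!_{s,t}·{n}!_{s,t} divides {2n}!_{s,t} in ℤ[s,t]; that is, the (s,t)-Catalan number (1/{n+1}_{s,t})·{2n choose n}_{s,t} is a polynomial in s and t with integer coefficients. -/

import Mathlib

open MvPolynomial

/-- The generalized Fibonacci polynomials `{m}_{s,t} ∈ ℤ[s,t]`, with `s = X 0`, `t = X 1`. -/
noncomputable def gfib : ℕ → MvPolynomial (Fin 2) ℤ
  | 0 => 0
  | 1 => 1
  | (m + 2) => X 0 * gfib (m + 1) + X 1 * gfib m

/-- The Fibonacci factorial `{m}!_{s,t}`. -/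
noncomputable def gfibFact : ℕ → MvPolynomial (Fin 2) ℤ
  | 0 => 1
  | (m + 1) => gfib (m + 1) * gfibFact m

theorem gfibFact_step (m : ℕ) : gfibFact (m + 1) = gfib (m + 1) * gfibFact m := by
  rw [gfibFact]

theorem gfib_add (m k : ℕ) :
    gfib (m + k + 1) = gfib (m + 1) * gfib (k + 1) + X 1 * gfib m * gfib k := by
  induction m using Nat.twoStepInduction with
  | zero => simp [gfib]
  | one =>
    rw [show 1 + k + 1 = k + 2 by ring]
    simp [gfib]
  | more m h1 h2 =>
    rw [show m + 2 + k + 1 = (m + k + 1) + 2 by ring, gfib,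
      show m + k + 1 + 1 = m + 1 + k + 1 by ring, h1, h2]
    rw [show gfib (m + 2 + 1) = X 0 * gfib (m + 1 + 1) + X 1 * gfib (m + 1) from by rw [gfib],
      show gfib (m + 2) = X 0 * gfib (m + 1) + X 1 * gfib m from by rw [gfib]]
    ring

theorem gfibFact_dvd (N : ℕ) : ∀ m k : ℕ, m + k = N →
    gfibFact m * gfibFact k ∣ gfibFact (m + k) := by
  induction N with
  | zero =>
    intro m k h
    obtain ⟨rfl, rfl⟩ : m = 0 ∧ k = 0 := by omega
    simp [gfibFact]
  | succ N ih =>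
    intro m k h
    rcases m with _ | m
    · simp [gfibFact]
    rcases k with _ | k
    · simp [gfibFact]
    obtain ⟨a, ha⟩ := ih m (k + 1) (by omega)
    obtain ⟨b, hb⟩ := ih (m + 1) k (by omega)
    rw [show m + 1 + k = m + (k + 1) by ring] at hb
    have hf : gfib (m + (k + 1) + 1)
        = gfib (m + 1) * gfib (k + 1 + 1) + X 1 * gfib m * gfib (k + 1) := gfib_add m (k + 1)
    rw [show m + 1 + (k + 1) = m + (k + 1) + 1 by ring, gfibFact_step (_ + (_ + _)), hf, add_mul]
    apply dvd_add
    · rw [ha]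
      exact ⟨gfib (k + 1 + 1) * a, by rw [gfibFact_step m]; ring⟩
    · rw [hb]
      exact ⟨X 1 * gfib m * b, by rw [gfibFact_step k]; ring⟩

/-- The `(s,t)`-Catalan number is a polynomial: for every `n`,
`{n+1}·{n}!·{n}!` divides `{2n}!` in `ℤ[s,t]`. -/
theorem st_catalan_is_polynomial (n : ℕ) :
    (gfib (n + 1) * gfibFact n * gfibFact n) ∣ gfibFact (2 * n) := by
  rcases n with _ | _ | k
  · simp [gfib, gfibFact]
  · simp [gfib, gfibFact]
  obtain ⟨a, ha⟩ := gfibFact_dvd _ (k + 1) (k + 2) rfl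
  obtain ⟨b, hb⟩ := gfibFact_dvd _ k (k + 3) rfl
  have hf : gfib ((k + 1) + (k + 2) + 1)
      = gfib (k + 2) * gfib (k + 3) + X 1 * gfib (k + 1) * gfib (k + 2) :=
    gfib_add (k + 1) (k + 2)
  rw [show k + (k + 3) = (k + 1) + (k + 2) by ring] at hb
  rw [show 2 * (k + 1 + 1) = (k + 1) + (k + 2) + 1 by ring, gfibFact_step (_ + (_ + _)), hf, add_mul]
  have e1 : gfibFact (k + 1) = gfib (k + 1) * gfibFact k := by rw [gfibFact_step]
  have e2 : gfibFact (k + 2) = gfib (k + 2) * gfibFact (k + 1) := by rw [gfibFact_step]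
  have e3 : gfibFact (k + 3) = gfib (k + 3) * gfibFact (k + 2) := by rw [gfibFact_step]
  change gfib (k + 3) * gfibFact (k + 2) * gfibFact (k + 2) ∣ _
  apply dvd_add
  · rw [ha]
    exact ⟨a, by rw [e2]; ring⟩
  · rw [hb]
    exact ⟨X 1 * b, by rw [e3, e2, e1]; ring⟩
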